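/- (Lerner–Ombrosi–Rivera-Ríos key lemma.) Let 0 < η < 1, let S be an η-sparse family of standard dyadic cubes in ℝ^d, and let b be a real-valued locally integrable function on ℝ^d. Then there exists an η/(2(1+η))-sparse family S̃ of standard dyadic cubes with S ⊆ S̃ such that for every Q ∈ S̃ and almost every x ∈ Q, |b(x) − ⟨b⟩_Q| ≤ 2^{d+2} · ∑_{R∈S̃, R⊆Q} Ω(b;R) · 1_R(x), where Ω(b;R) := (1/|R|)∫_R |b − ⟨b⟩_R|. -/

import Mathlib

open MeasureTheory ENNReal

noncomputable section

/-- The standard dyadic cube of generation `j` indexed by `k ∈ ℤ^d`. -/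
def dyadicCube (d : ℕ) (j : ℤ) (k : Fin d → ℤ) : Set (Fin d → ℝ) :=
  {x | ∀ i, (k i : ℝ) * (2:ℝ) ^ (-j) ≤ x i ∧ x i < ((k i : ℝ) + 1) * (2:ℝ) ^ (-j)}

/-- The standard dyadic cube with parameter pair `q = (j, k)`. -/
def dCube (d : ℕ) (q : ℤ × (Fin d → ℤ)) : Set (Fin d → ℝ) := dyadicCube d q.1 q.2

/-- A family `S` of standard dyadic cubes (given by parameters) is `η`-sparse if there are
pairwise disjoint measurable sets `E_Q ⊆ Q`, `Q ∈ S`, with `|E_Q| ≥ η |Q|`. -/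
def IsSparse (d : ℕ) (η : ℝ) (S : Set (ℤ × (Fin d → ℤ))) : Prop :=
  ∃ E : {q // q ∈ S} → Set (Fin d → ℝ),
    (∀ q, MeasurableSet (E q)) ∧ (∀ q, E q ⊆ dCube d q.1) ∧
    (∀ q r, q ≠ r → Disjoint (E q) (E r)) ∧
    (∀ q, ENNReal.ofReal η * volume (dCube d q.1) ≤ volume (E q))

/-- The average of `f` over the set `Q` (with respect to Lebesgue measure). -/
def avg {d : ℕ} (Q : Set (Fin d → ℝ)) (f : (Fin d → ℝ) → ℝ) : ℝ :=
  (volume Q).toReal⁻¹ * ∫ x in Q, f x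

/-!
Stop, inside each cube `P`, at the maximal cubes which lie in `S` or over which `|b - ⟨b⟩_P|`
averages more than `2 Ω(b; P)`, and iterate starting from `S`. Between consecutive stopping cubes,
and from the last one to any smaller cube, the average of `b` changes by at most
`2^{d+1} Ω(b; P)`, because the dyadic parent of a stopping cube has not been stopped at. Telescoping
and the Lebesgue differentiation theorem give the pointwise bound.

For sparseness, the weak type inequality leaves at least half of `P` outside the cubes stopped at
because of `b`; call it `G`. What remains of `G` outside the cubes of `S` inside `P` is disjoint
from the corresponding remainders of all other stopping cubes, but it may be too small. The lost
part of `G` lies in the maximal cubes `R ∈ S` inside `P`, and is compensated by a portion of the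
set `E_R` that witnesses the sparseness of `S`. Each `E_R` has room for the compensations owed to
all stopping cubes when every mass is scaled by `η / (1 + η)`. This assigns fractional masses only;
since Lebesgue measure has no atoms, they are realised by disjoint sets.
-/

section Splitting

open Set Filter Function Topology

lemma continuous_measure_Iic (ν : Measure ℝ) [IsFiniteMeasure ν] [NullSingletonClass ν] :
    Continuous fun t => ν (Iic t) := by
  refine continuous_iff_continuousAt.2 fun t =>
    tendsto_measure_of_ae_tendsto_indicator_of_isFiniteMeasure _ measurableSet_Iic
      (fun _ => measurableSet_Iic) ?_
  filter_upwards [compl_mem_ae_iff.2 (measure_singleton t)] with x (hx : x ≠ t)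
  rcases hx.lt_or_gt with h | h
  · filter_upwards [eventually_gt_nhds h] with u hu
    simp only [mem_Iic, hu.le, h.le]
  · filter_upwards [eventually_lt_nhds h] with u hu
    simp only [mem_Iic, hu.not_ge, h.not_ge]

lemma tendsto_measure_Iic_atBot (ν : Measure ℝ) [IsFiniteMeasure ν] :
    Tendsto (fun t => ν (Iic t)) atBot (𝓝 0) := by
  rw [← measure_empty (μ := ν)]
  refine tendsto_measure_of_ae_tendsto_indicator_of_isFiniteMeasure _ .empty
    (fun _ => measurableSet_Iic) (.of_forall fun x => ?_)
  filter_upwards [eventually_lt_atBot x] with t ht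
  simp only [mem_Iic, ht.not_ge, mem_empty_iff_false]

-- The sublevel set is a closed lower set, hence empty, all of `ℝ` or a half-line.
lemma measure_setOf_measure_Iic_le (ν : Measure ℝ) [IsFiniteMeasure ν] [NullSingletonClass ν]
    {s : ℝ≥0∞} (hs : s ≤ ν univ) : ν {t | ν (Iic t) ≤ s} = s := by
  set L := {t | ν (Iic t) ≤ s}
  have hclosed : IsClosed L := isClosed_le (continuous_measure_Iic ν) continuous_const
  have hlower : IsLowerSet L := fun t u hut ht => (measure_mono (Iic_subset_Iic.2 hut)).trans ht
  rcases L.eq_empty_or_nonempty with hempty | hne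
  · have hs0 : s ≤ 0 := ge_of_tendsto' (tendsto_measure_Iic_atBot ν) fun t =>
      le_of_not_ge fun ht => hempty.le ht
    rw [hempty, measure_empty, nonpos_iff_eq_zero.1 hs0]
  by_cases hbdd : BddAbove L
  · have hmax : IsGreatest L (sSup L) := hclosed.isGreatest_csSup hne hbdd
    have hL : L = Iic (sSup L) := Subset.antisymm hmax.2 (hlower.Iic_subset hmax.1)
    have hlim : Tendsto (fun t => ν (Iic t)) (𝓝[>] sSup L) (𝓝 (ν (Iic (sSup L)))) :=
      (continuous_measure_Iic ν).continuousWithinAt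
    rw [hL]
    refine le_antisymm hmax.1 (ge_of_tendsto hlim ?_)
    filter_upwards [self_mem_nhdsWithin] with t ht
    exact le_of_not_ge fun htL => (hmax.2 htL).not_gt ht
  · have hL : L = univ := eq_univ_of_forall fun t =>
      let ⟨_, hu, htu⟩ := not_bddAbove_iff.1 hbdd t
      hlower htu.le hu
    rw [hL]
    exact le_antisymm (le_of_tendsto' (tendsto_measure_Iic_atTop ν) (eq_univ_iff_forall.1 hL)) hs

lemma exists_measurable_label {Ω ι : Type*} [MeasurableSpace Ω] [Countable ι] {E : ι → Set Ω}
    (hE : ∀ i, MeasurableSet (E i)) (hd : Pairwise (Disjoint on E)) :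
    ∃ e : Ω → Option ι, (∀ x i, e x = some i ↔ x ∈ E i) ∧ ∀ a, MeasurableSet (e ⁻¹' {a}) := by
  classical
  have hex : ∀ x, ∃ a : Option ι, ∀ i, a = some i ↔ x ∈ E i := fun x => by
    by_cases h : ∃ i, x ∈ E i
    · obtain ⟨i, hi⟩ := h
      refine ⟨some i, fun j => ⟨fun hij => Option.some_injective _ hij ▸ hi, fun hj => ?_⟩⟩
      exact congrArg some (by_contra fun hne => disjoint_left.1 (hd hne) hi hj)
    · exact ⟨none, fun i => by simpa using fun hi => h ⟨i, hi⟩⟩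
  choose e he using hex
  refine ⟨e, he, fun a => ?_⟩
  rcases a with _ | i
  · have hnone : e ⁻¹' {none} = (⋃ i, E i)ᶜ := ext fun x => by
      simp [← he, Option.eq_none_iff_forall_ne_some]
    exact hnone ▸ (MeasurableSet.iUnion hE).compl
  · have hsome : e ⁻¹' {some i} = E i := ext fun x => he x i
    exact hsome ▸ hE i

variable {Ω : Type*} [MeasurableSpace Ω] [StandardBorelSpace Ω] {μ : Measure Ω}
  [NullSingletonClass μ]

lemma exists_monotone_subset_measure_eq {X : Set Ω} (hX : MeasurableSet X) (hfin : μ X ≠ ∞) :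
    ∃ U : ℝ≥0∞ → Set Ω, Monotone U ∧ (∀ s, MeasurableSet (U s)) ∧ (∀ s, U s ⊆ X) ∧
      ∀ s ≤ μ X, μ (U s) = s := by
  have he := measurableEmbedding_embeddingReal Ω
  have hfinite : IsFiniteMeasure (μ.restrict X) := ⟨by simpa using hfin.lt_top⟩
  set ν := (μ.restrict X).map (embeddingReal Ω)
  have hν : NullSingletonClass ν := ⟨fun t => by
    rw [he.map_apply]
    exact (subsingleton_singleton.preimage he.injective).measure_zero _⟩
  have hL : ∀ s, MeasurableSet {t | ν (Iic t) ≤ s} := fun s =>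
    (isClosed_le (continuous_measure_Iic ν) continuous_const).measurableSet
  refine ⟨fun s => X ∩ embeddingReal Ω ⁻¹' {t | ν (Iic t) ≤ s}, fun s s' hs => ?_,
    fun s => hX.inter (he.measurable (hL s)), fun s => inter_subset_left, fun s hs => ?_⟩
  · exact inter_subset_inter_right X (preimage_mono fun t ht => le_trans ht hs)
  · have hmass : ν univ = μ X := by rw [he.map_apply, preimage_univ, Measure.restrict_apply_univ]
    beta_reduce
    rw [inter_comm, ← Measure.restrict_apply (he.measurable (hL s)), ← he.map_apply,
      measure_setOf_measure_Iic_le ν (hmass ▸ hs)]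

lemma exists_pairwise_disjoint_subset_measure_eq {κ : Type*} [Countable κ] {X : Set Ω}
    (hX : MeasurableSet X) (hfin : μ X ≠ ∞) {m : κ → ℝ≥0∞} (hm : ∑' k, m k ≤ μ X) :
    ∃ Y : κ → Set Ω, (∀ k, MeasurableSet (Y k)) ∧ (∀ k, Y k ⊆ X) ∧ Pairwise (Disjoint on Y) ∧
      ∀ k, μ (Y k) = m k := by
  obtain ⟨e, he⟩ := exists_injective_nat κ
  obtain ⟨U, hUmono, hUm, hUX, hUμ⟩ := exists_monotone_subset_measure_eq hX hfin
  set s : ℕ → ℝ≥0∞ := fun n => ∑ i ∈ Finset.range n, extend e m 0 i with hs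
  have hsmono : Monotone s := fun _ _ h => Finset.sum_le_sum_of_subset (Finset.range_mono h)
  have hsX : ∀ n, s n ≤ μ X := fun n =>
    (ENNReal.sum_le_tsum _).trans ((tsum_extend_zero he m).le.trans hm)
  have hUs : Monotone fun n => U (s n) := hUmono.comp hsmono
  refine ⟨fun k => U (s (e k + 1)) \ U (s (e k)), fun k => (hUm _).diff (hUm _),
    fun k => sdiff_subset.trans (hUX _), ?_, fun k => ?_⟩
  · intro k l hkl
    have hne : e k + 1 ≠ e l + 1 := fun h => hkl (he (Nat.succ_injective h))
    have hdisj := disjoint_disjointed (fun n => U (s n)) hne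
    simpa only [onFun, hUs.disjointed_add_one] using hdisj
  · rw [measure_sdiff (hUs (Nat.le_succ _)) (hUm _).nullMeasurableSet
      (measure_ne_top_of_subset (hUX _) hfin), hUμ _ (hsX _), hUμ _ (hsX _)]
    simp only [hs, Finset.sum_range_succ, he.extend_apply]
    exact ENNReal.add_sub_cancel_left (ne_top_of_le_ne_top hfin (hsX _))

lemma exists_pairwise_disjoint_measure_eq_tsum {ι κ : Type*} [Countable ι] [Countable κ]
    {X : ι → Set Ω} (hX : ∀ i, MeasurableSet (X i)) (hfin : ∀ i, μ (X i) ≠ ∞)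
    (hd : Pairwise (Disjoint on X)) {m : κ → ι → ℝ≥0∞} (hm : ∀ i, ∑' k, m k i ≤ μ (X i)) :
    ∃ Y : κ → Set Ω, (∀ k, MeasurableSet (Y k)) ∧ Pairwise (Disjoint on Y) ∧
      (∀ k, ∀ x ∈ Y k, ∃ i, m k i ≠ 0 ∧ x ∈ X i) ∧ ∀ k, μ (Y k) = ∑' i, m k i := by
  choose Z hZm hZX hZd hZμ using fun i =>
    exists_pairwise_disjoint_subset_measure_eq (hX i) (hfin i) (hm i)
  have hYX : ∀ k i, {x ∈ Z i k | m k i ≠ 0} ⊆ X i := fun k i x hx => hZX i k hx.1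
  have hYm : ∀ k i, MeasurableSet {x ∈ Z i k | m k i ≠ 0} := fun k i =>
    (hZm i k).inter (.const _)
  have hYμ : ∀ k i, μ {x ∈ Z i k | m k i ≠ 0} = m k i := fun k i => by
    by_cases h : m k i = 0 <;> simp [h, hZμ]
  refine ⟨fun k => ⋃ i, {x ∈ Z i k | m k i ≠ 0}, fun k => .iUnion (hYm k), fun k l hkl => ?_,
    fun k x hx => ?_, fun k => ?_⟩
  · refine disjoint_iUnion_left.2 fun i => disjoint_iUnion_right.2 fun j => ?_
    obtain rfl | hij := eq_or_ne i j
    · exact (hZd i hkl).mono (sep_subset _ _) (sep_subset _ _)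
    · exact (hd hij).mono (hYX k i) (hYX l j)
  · obtain ⟨i, hi⟩ := mem_iUnion.1 hx
    exact ⟨i, hi.2, hYX k i hi⟩
  · rw [measure_iUnion (fun i j hij => (hd hij).mono (hYX k i) (hYX k j)) (hYm k)]
    exact tsum_congr (hYμ k)

-- Each piece `p ⁻¹' {a} ∩ D n` of a countable partition into sets of finite measure gives
-- the proportion `f k a` of its mass to `Y k`.
lemma exists_pairwise_disjoint_measure_eq_lintegral [SigmaFinite μ] {α κ : Type*} [Countable α]
    [Countable κ] {p : Ω → α} (hp : ∀ a, MeasurableSet (p ⁻¹' {a})) {f : κ → α → ℝ≥0∞}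
    (hf : ∀ a, ∑' k, f k a ≤ 1) :
    ∃ Y : κ → Set Ω, (∀ k, MeasurableSet (Y k)) ∧ Pairwise (Disjoint on Y) ∧
      (∀ k, ∀ x ∈ Y k, f k (p x) ≠ 0) ∧ ∀ k, μ (Y k) = ∫⁻ x, f k (p x) ∂μ := by
  set D : ℕ → Set Ω := disjointed (spanningSets μ)
  set X : α × ℕ → Set Ω := fun i => p ⁻¹' {i.1} ∩ D i.2
  have hXm : ∀ i, MeasurableSet (X i) := fun i =>
    (hp i.1).inter (.disjointed (measurableSet_spanningSets μ) i.2)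
  have hXfin : ∀ i, μ (X i) ≠ ∞ := fun i => measure_ne_top_of_subset
    (inter_subset_right.trans (disjointed_le _ _)) (measure_spanningSets_lt_top μ i.2).ne
  have hXd : Pairwise (Disjoint on X) := fun i j hij => disjoint_left.2 fun x hi hj => hij <|
    Prod.ext (hi.1.symm.trans hj.1) <| by_contra fun hne =>
      disjoint_left.1 (disjoint_disjointed _ hne) hi.2 hj.2
  have hXuniv : ⋃ i, X i = univ := eq_univ_of_forall fun x => by
    have hx : x ∈ ⋃ n, D n := by rw [iUnion_disjointed, iUnion_spanningSets]; trivial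
    obtain ⟨n, hn⟩ := mem_iUnion.1 hx
    exact mem_iUnion.2 ⟨(p x, n), rfl, hn⟩
  have hmass : ∀ i, ∑' k, f k i.1 * μ (X i) ≤ μ (X i) := fun i => by
    rw [ENNReal.tsum_mul_right]
    exact mul_le_of_le_one_left' (hf i.1)
  obtain ⟨Y, hYm, hYd, hYX, hYμ⟩ := exists_pairwise_disjoint_measure_eq_tsum hXm hXfin hXd hmass
  refine ⟨Y, hYm, hYd, fun k x hx => ?_, fun k => ?_⟩
  · obtain ⟨i, hi, hpx, -⟩ := hYX k x hx
    rw [show p x = i.1 from hpx]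
    exact left_ne_zero_of_mul hi
  · calc μ (Y k) = ∑' i, f k i.1 * μ (X i) := hYμ k
      _ = ∑' i, ∫⁻ x in X i, f k (p x) ∂μ := tsum_congr fun i => by
          rw [← setLIntegral_const]
          exact setLIntegral_congr_fun (hXm i) fun x hx => congrArg (f k) hx.1.symm
      _ = ∫⁻ x, f k (p x) ∂μ := by
          rw [← lintegral_iUnion hXm hXd, hXuniv, setLIntegral_univ]

-- The density of `Y k` is `c` on `H k` plus the proportion `w k i / μ (E i)` on each `E i`.
lemma exists_pairwise_disjoint_measure_eq_add_tsum [SigmaFinite μ] {ι κ : Type*} [Countable ι]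
    [Countable κ] {E : ι → Set Ω} {H : κ → Set Ω} (hE : ∀ i, MeasurableSet (E i))
    (hH : ∀ k, MeasurableSet (H k)) (hEd : Pairwise (Disjoint on E))
    (hHd : Pairwise (Disjoint on H)) (hEfin : ∀ i, μ (E i) ≠ ∞) {c c' : ℝ≥0∞} (hc : c + c' ≤ 1)
    {w : κ → ι → ℝ≥0∞} (hw : ∀ i, ∑' k, w k i ≤ c' * μ (E i)) :
    ∃ Y : κ → Set Ω, (∀ k, MeasurableSet (Y k)) ∧ Pairwise (Disjoint on Y) ∧
      (∀ k, ∀ x ∈ Y k, x ∈ H k ∨ ∃ i, w k i ≠ 0 ∧ x ∈ E i) ∧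
      ∀ k, μ (Y k) = c * μ (H k) + ∑' i, w k i := by
  classical
  obtain ⟨e, he, hem⟩ := exists_measurable_label hE hEd
  obtain ⟨h, hh, hhm⟩ := exists_measurable_label hH hHd
  set f : κ → Option ι × Option κ → ℝ≥0∞ := fun k a =>
    (if a.2 = some k then c else 0) + a.1.elim 0 fun i => w k i / μ (E i)
  have hf : ∀ a, ∑' k, f k a ≤ 1 := fun a => by
    rw [ENNReal.tsum_add]
    refine (add_le_add ?_ ?_).trans hc
    · rcases a.2 with _ | l <;> simp [tsum_ite_eq']
    · rcases a.1 with _ | i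
      · simp
      · simp only [Option.elim_some, div_eq_mul_inv, ENNReal.tsum_mul_right]
        exact ENNReal.div_le_of_le_mul (hw i)
  have hfp : ∀ k x, f k (e x, h x) =
      (H k).indicator (fun _ => c) x + ∑' i, (E i).indicator (fun _ => w k i / μ (E i)) x := by
    intro k x
    simp only [f, indicator_apply, ← he, ← hh]
    rcases e x with _ | i <;> simp [tsum_ite_eq']
  have hpm : ∀ a, MeasurableSet ((fun x => (e x, h x)) ⁻¹' {a}) := fun a => by
    rw [← singleton_prod_singleton (a := a.1) (b := a.2), mk_preimage_prod]
    exact (hem _).inter (hhm _)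
  obtain ⟨Y, hYm, hYd, hYsupp, hYμ⟩ := exists_pairwise_disjoint_measure_eq_lintegral
    (μ := μ) hpm hf
  simp only [hfp] at hYsupp hYμ
  refine ⟨Y, hYm, hYd, fun k x hx => ?_, fun k => ?_⟩
  · have hx0 := hYsupp k x hx
    rw [ne_eq, add_eq_zero, not_and_or, ENNReal.tsum_eq_zero, not_forall] at hx0
    refine hx0.imp mem_of_indicator_ne_zero fun ⟨i, hi⟩ => ?_
    have hxi : x ∈ E i := mem_of_indicator_ne_zero hi
    rw [indicator_of_mem hxi] at hi
    exact ⟨i, fun hwi => hi (by rw [hwi, ENNReal.zero_div]), hxi⟩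
  · have hwE : ∀ i, μ (E i) = 0 → w k i = 0 := fun i h0 =>
      nonpos_iff_eq_zero.1 ((ENNReal.le_tsum k).trans ((hw i).trans_eq (by rw [h0, mul_zero])))
    have hterm : ∀ i, w k i / μ (E i) * μ (E i) = w k i := fun i =>
      ENNReal.div_mul_cancel' (hwE i) fun htop => absurd htop (hEfin i)
    rw [hYμ, lintegral_add_left (measurable_const.indicator (hH k)),
      lintegral_indicator_const (hH k),
      lintegral_tsum fun i => (measurable_const.indicator (hE i)).aemeasurable]
    simp only [lintegral_indicator_const (hE _), hterm]

end Splitting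

section DyadicCubes

open Set Function Metric

/-- The parameters `(j, k)` of a standard dyadic cube: its generation `j` and its position `k`. -/
abbrev DyadicIndex (d : ℕ) := ℤ × (Fin d → ℤ)

variable {d : ℕ}

lemma mem_dCube_iff {q : DyadicIndex d} {x : Fin d → ℝ} :
    x ∈ dCube d q ↔ ∀ i, ⌊x i * (2 : ℝ) ^ q.1⌋ = q.2 i := by
  have h2 : (0 : ℝ) < (2 : ℝ) ^ q.1 := by positivity
  simp only [dCube, dyadicCube, mem_ofPred_eq, Int.floor_eq_iff, zpow_neg,
    ← div_eq_mul_inv, div_le_iff₀ h2, lt_div_iff₀ h2]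

/-- The index of the dyadic cube of generation `j` containing `x`. -/
def cubeAt (x : Fin d → ℝ) (j : ℤ) : DyadicIndex d := (j, fun i => ⌊x i * (2 : ℝ) ^ j⌋)

lemma mem_cubeAt (x : Fin d → ℝ) (j : ℤ) : x ∈ dCube d (cubeAt x j) :=
  mem_dCube_iff.2 fun _ => rfl

lemma floor_mul_two_zpow (t : ℝ) {j l : ℤ} (h : l ≤ j) :
    ⌊t * (2 : ℝ) ^ l⌋ = ⌊t * (2 : ℝ) ^ j⌋ / ((2 ^ (j - l).toNat : ℕ) : ℤ) := by
  rw [← Int.floor_div_natCast]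
  congr 1
  have hj : (2 : ℝ) ^ j = (2 : ℝ) ^ l * (2 : ℝ) ^ (j - l).toNat := by
    rw [← zpow_natCast, Int.toNat_of_nonneg (by lia), ← zpow_add₀ two_ne_zero]
    congr 1; ring
  push_cast
  rw [hj]
  field_simp

lemma dCube_subset_of_mem {q r : DyadicIndex d} {x : Fin d → ℝ} (hq : x ∈ dCube d q)
    (hr : x ∈ dCube d r) (h : r.1 ≤ q.1) : dCube d q ⊆ dCube d r := by
  intro y hy
  rw [mem_dCube_iff] at *
  intro i
  rw [← hr i, floor_mul_two_zpow _ h, floor_mul_two_zpow _ h, hq, hy]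

lemma dCube_subset_or_subset {q r : DyadicIndex d} {x : Fin d → ℝ} (hq : x ∈ dCube d q)
    (hr : x ∈ dCube d r) : dCube d q ⊆ dCube d r ∨ dCube d r ⊆ dCube d q :=
  (le_total r.1 q.1).imp (dCube_subset_of_mem hq hr) (dCube_subset_of_mem hr hq)

lemma dCube_nonempty (q : DyadicIndex d) : (dCube d q).Nonempty := by
  refine ⟨fun i => q.2 i * (2 : ℝ) ^ (-q.1), mem_dCube_iff.2 fun i => ?_⟩
  rw [mul_assoc, ← zpow_add₀ two_ne_zero]
  simp

lemma dCube_eq_pi (q : DyadicIndex d) :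
    dCube d q = univ.pi fun i =>
      Ico ((q.2 i : ℝ) * (2 : ℝ) ^ (-q.1)) (((q.2 i : ℝ) + 1) * (2 : ℝ) ^ (-q.1)) := by
  ext x
  simp [dCube, dyadicCube]

lemma measurableSet_dCube (q : DyadicIndex d) : MeasurableSet (dCube d q) := by
  rw [dCube_eq_pi]
  exact MeasurableSet.univ_pi fun _ => measurableSet_Ico

lemma measurableSet_biUnion_dCube (A : Set (DyadicIndex d)) :
    MeasurableSet (⋃ R ∈ A, dCube d R) :=
  .biUnion A.to_countable fun R _ => measurableSet_dCube R

lemma volume_dCube (q : DyadicIndex d) :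
    volume (dCube d q) = ENNReal.ofReal ((2 : ℝ) ^ (-q.1)) ^ d := by
  rw [dCube_eq_pi, Real.volume_pi_Ico]
  simp [add_mul]

lemma volume_dCube_ne_top (q : DyadicIndex d) : volume (dCube d q) ≠ ∞ := by
  rw [volume_dCube]; finiteness

lemma volume_dCube_toReal (q : DyadicIndex d) :
    (volume (dCube d q)).toReal = ((2 : ℝ) ^ (-q.1)) ^ d := by
  rw [volume_dCube, ENNReal.toReal_pow, ENNReal.toReal_ofReal (by positivity)]

lemma volume_dCube_toReal_pos (q : DyadicIndex d) : 0 < (volume (dCube d q)).toReal := by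
  rw [volume_dCube_toReal]; positivity

lemma volume_dCube_ne_zero (q : DyadicIndex d) : volume (dCube d q) ≠ 0 := by
  rw [volume_dCube]
  exact pow_ne_zero _ (ENNReal.ofReal_pos.2 (by positivity)).ne'

/-- The center of a dyadic cube. For the supremum metric of `Fin d → ℝ`, a dyadic cube is a closed
ball around its center up to its boundary. -/
def cubeCenter (q : DyadicIndex d) : Fin d → ℝ := fun i => ((q.2 i : ℝ) + 1 / 2) * (2 : ℝ) ^ (-q.1)

lemma closedBall_cubeCenter (q : DyadicIndex d) :
    closedBall (cubeCenter q) ((2 : ℝ) ^ (-q.1) / 2) =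
      Icc (fun i => (q.2 i : ℝ) * (2 : ℝ) ^ (-q.1))
        (fun i => ((q.2 i : ℝ) + 1) * (2 : ℝ) ^ (-q.1)) := by
  rw [closedBall_pi _ (by positivity), ← pi_univ_Icc]
  refine pi_congr rfl fun i _ => ?_
  rw [Real.closedBall_eq_Icc, cubeCenter]
  congr 1 <;> ring

lemma dCube_subset_closedBall (q : DyadicIndex d) :
    dCube d q ⊆ closedBall (cubeCenter q) ((2 : ℝ) ^ (-q.1) / 2) := by
  rw [closedBall_cubeCenter]
  exact fun x hx => ⟨fun i => (hx i).1, fun i => (hx i).2.le⟩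

lemma dCube_ae_eq_closedBall (q : DyadicIndex d) :
    dCube d q =ᵐ[volume] closedBall (cubeCenter q) ((2 : ℝ) ^ (-q.1) / 2) := by
  rw [closedBall_cubeCenter, dCube_eq_pi]
  exact Measure.univ_pi_Ico_ae_eq_Icc

lemma integrableOn_dCube {b : (Fin d → ℝ) → ℝ} (hb : LocallyIntegrable b volume)
    (q : DyadicIndex d) : IntegrableOn b (dCube d q) volume :=
  (hb.integrableOn_isCompact (isCompact_closedBall _ _)).mono_set (dCube_subset_closedBall q)

lemma exists_maximalFor_superset {A : Set (DyadicIndex d)} {m : ℤ} (hA : ∀ R ∈ A, m ≤ R.1)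
    {R : DyadicIndex d} (hR : R ∈ A) :
    ∃ M, MaximalFor (· ∈ A) (dCube d) M ∧ dCube d R ⊆ dCube d M := by
  obtain ⟨j, ⟨M, hMA, hRM, rfl⟩, hmin⟩ := Int.exists_least_of_bdd
    (P := fun j => ∃ M ∈ A, dCube d R ⊆ dCube d M ∧ M.1 = j)
    ⟨m, by rintro _ ⟨M, hM, -, rfl⟩; exact hA M hM⟩ ⟨R.1, R, hR, subset_rfl, rfl⟩
  refine ⟨M, ⟨hMA, fun R' hR' hMR' => ?_⟩, hRM⟩
  obtain ⟨x, hx⟩ := dCube_nonempty M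
  exact dCube_subset_of_mem (hMR' hx) hx (hmin _ ⟨R', hR', hRM.trans hMR', rfl⟩)

lemma biUnion_dCube_eq_iUnion_maximalFor {A : Set (DyadicIndex d)} {m : ℤ}
    (hA : ∀ R ∈ A, m ≤ R.1) :
    ⋃ R ∈ A, dCube d R = ⋃ R : {R // MaximalFor (· ∈ A) (dCube d) R}, dCube d R := by
  refine Subset.antisymm (iUnion₂_subset fun R hR => ?_)
    (iUnion_subset fun R => subset_biUnion_of_mem (u := dCube d) R.2.1)
  obtain ⟨M, hM, hRM⟩ := exists_maximalFor_superset hA hR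
  exact subset_iUnion_of_subset ⟨M, hM⟩ hRM

variable [NeZero d]

lemma generation_le_of_subset {q r : DyadicIndex d}
    (h : dCube d q ⊆ dCube d r) : r.1 ≤ q.1 := by
  have hv := ENNReal.toReal_mono (volume_dCube_ne_top r) (measure_mono h)
  rw [volume_dCube_toReal, volume_dCube_toReal,
    pow_le_pow_iff_left₀ (by positivity) (by positivity) (NeZero.ne d),
    zpow_le_zpow_iff_right₀ _root_.one_lt_two] at hv
  lia

lemma dCube_injective : Injective (dCube d) := by
  intro q r h
  have h1 : q.1 = r.1 :=
    le_antisymm (generation_le_of_subset h.ge) (generation_le_of_subset h.le)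
  obtain ⟨x, hx⟩ := dCube_nonempty q
  have hx' : x ∈ dCube d r := h ▸ hx
  rw [mem_dCube_iff] at hx hx'
  refine Prod.ext h1 (funext fun i => ?_)
  rw [← hx, ← hx', h1]

lemma generation_lt_of_ssubset {q r : DyadicIndex d}
    (h : dCube d q ⊂ dCube d r) : r.1 < q.1 := by
  refine lt_of_le_of_ne (generation_le_of_subset h.subset) fun he => ?_
  obtain ⟨x, hx⟩ := dCube_nonempty q
  exact h.not_subset (dCube_subset_of_mem (h.subset hx) hx he.ge)

lemma exists_parent_of_ssubset {R P : DyadicIndex d} (h : dCube d R ⊂ dCube d P) :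
    ∃ R' : DyadicIndex d, R'.1 + 1 = R.1 ∧ dCube d R ⊆ dCube d R' ∧ dCube d R' ⊆ dCube d P := by
  obtain ⟨x, hx⟩ := dCube_nonempty R
  have hx' : x ∈ dCube d (cubeAt x (R.1 - 1)) := mem_cubeAt x _
  have hgen : P.1 ≤ R.1 - 1 := Int.le_sub_one_of_lt (generation_lt_of_ssubset h)
  exact ⟨cubeAt x (R.1 - 1), sub_add_cancel _ _, dCube_subset_of_mem hx hx' (sub_one_lt _).le,
    dCube_subset_of_mem hx' (h.subset hx) hgen⟩

lemma pairwise_disjoint_of_ssubset {A : Set (DyadicIndex d)} {F : A → Set (Fin d → ℝ)}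
    (hF : ∀ P : A, F P ⊆ dCube d P)
    (hdisj : ∀ P P' : A, dCube d P' ⊂ dCube d P → Disjoint (F P) (F P')) :
    Pairwise (Disjoint on F) := by
  intro P P' hne
  have hne' : dCube d P ≠ dCube d P' := fun h => hne (Subtype.ext (dCube_injective h))
  by_contra hinter
  obtain ⟨x, hx, hx'⟩ := not_disjoint_iff.1 hinter
  rcases dCube_subset_or_subset (hF P hx) (hF P' hx') with h | h
  · exact hinter (hdisj P' P (h.ssubset_of_ne hne')).symm
  · exact hinter (hdisj P P' (h.ssubset_of_ne hne'.symm))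

lemma pairwise_disjoint_of_maximalFor {A : Set (DyadicIndex d)} :
    Pairwise (Disjoint on fun R : {R // MaximalFor (· ∈ A) (dCube d) R} => dCube d R) :=
  pairwise_disjoint_of_ssubset (A := {R | MaximalFor (· ∈ A) (dCube d) R}) (fun _ => subset_rfl)
    fun P P' h => absurd (P'.2.2 P.2.1 h.subset) h.not_subset

end DyadicCubes

section Sparse

open Set Function

variable {d : ℕ}

/-- The cubes of `S` strictly inside the cube `P`. -/
def below (S : Set (DyadicIndex d)) (P : DyadicIndex d) : Set (DyadicIndex d) :=
  {R | R ∈ S ∧ dCube d R ⊂ dCube d P}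

/-- The part of `G P` that no cube of `S` strictly inside `P` covers. -/
def uncovered (S : Set (DyadicIndex d)) (G : DyadicIndex d → Set (Fin d → ℝ))
    (P : DyadicIndex d) : Set (Fin d → ℝ) :=
  G P \ ⋃ R ∈ below S P, dCube d R

/-- The part of `G P` inside `R`, made empty unless `R` is a maximal cube of `S` strictly
inside `P`, so that the traces of the cubes of `S` cover what `uncovered S G P` misses. -/
def trace (S : Set (DyadicIndex d)) (G : DyadicIndex d → Set (Fin d → ℝ))
    (P R : DyadicIndex d) : Set (Fin d → ℝ) :=
  {x | MaximalFor (· ∈ below S P) (dCube d) R ∧ x ∈ dCube d R ∩ G P}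

/-- The sets `G P` separate the nested cubes of `S'` relative to `S`: whatever lies in `S'`
strictly inside `P` is shielded by a cube of `S` or by a cube missing `G P`. -/
def SeparatesNested (S S' : Set (DyadicIndex d)) (G : DyadicIndex d → Set (Fin d → ℝ)) : Prop :=
  ∀ P ∈ S', ∀ P' ∈ S', dCube d P' ⊂ dCube d P → ∃ R,
    dCube d P' ⊆ dCube d R ∧ dCube d R ⊂ dCube d P ∧ (R ∈ S ∨ Disjoint (dCube d R) (G P))

variable {S S' : Set (DyadicIndex d)} {G : DyadicIndex d → Set (Fin d → ℝ)}

lemma measurableSet_uncovered (hG : ∀ P, MeasurableSet (G P)) (P : DyadicIndex d) :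
    MeasurableSet (uncovered S G P) :=
  (hG P).diff (measurableSet_biUnion_dCube _)

lemma measurableSet_trace (hG : ∀ P, MeasurableSet (G P)) (P R : DyadicIndex d) :
    MeasurableSet (trace S G P R) :=
  (MeasurableSet.const _).inter ((measurableSet_dCube R).inter (hG P))

variable [NeZero d]

lemma subset_uncovered_union_trace (P : DyadicIndex d) :
    G P ⊆ uncovered S G P ∪ ⋃ R : S, trace S G P R := by
  intro x hx
  by_cases h : x ∈ ⋃ R ∈ below S P, dCube d R
  · obtain ⟨R, hR, hxR⟩ := mem_iUnion₂.1 h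
    obtain ⟨M, hM, hRM⟩ := exists_maximalFor_superset (A := below S P) (m := P.1)
      (fun _ hR => generation_le_of_subset hR.2.subset) hR
    exact Or.inr (mem_iUnion.2 ⟨⟨M, hM.1.1⟩, hM, hRM hxR, hx⟩)
  · exact Or.inl ⟨hx, h⟩

lemma SeparatesNested.pairwise_disjoint_uncovered (h : SeparatesNested S S' G)
    (hG : ∀ P, G P ⊆ dCube d P) : Pairwise (Disjoint on fun P : S' => uncovered S G P) := by
  refine pairwise_disjoint_of_ssubset (fun P => sdiff_subset.trans (hG P)) fun P P' hP => ?_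
  obtain ⟨R, hP'R, hRP, hR⟩ := h P P.2 P' P'.2 hP
  refine disjoint_left.2 fun x hx hx' => ?_
  have hxR : x ∈ dCube d R := hP'R (hG P' hx'.1)
  rcases hR with hRS | hRG
  · exact hx.2 (mem_biUnion (⟨hRS, hRP⟩ : R ∈ below S P) hxR)
  · exact disjoint_left.1 hRG hxR hx.1

lemma SeparatesNested.pairwise_disjoint_trace (h : SeparatesNested S S' G)
    (hG : ∀ P, G P ⊆ dCube d P) (R : DyadicIndex d) :
    Pairwise (Disjoint on fun P : S' => trace S G P R) := by
  refine pairwise_disjoint_of_ssubset (fun P x hx => hG P hx.2.2) fun P P' hP => ?_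
  obtain ⟨Q, hP'Q, hQP, hQ⟩ := h P P.2 P' P'.2 hP
  refine disjoint_left.2 fun x hx hx' => ?_
  rcases hQ with hQS | hQG
  · have hRP' : dCube d R ⊂ dCube d P' := hx'.1.1.2
    have hQR : dCube d Q ⊆ dCube d R := hx.1.2 ⟨hQS, hQP⟩ (hRP'.subset.trans hP'Q)
    exact hRP'.not_subset (hP'Q.trans hQR)
  · exact disjoint_left.1 hQG (hP'Q (hG P' hx'.2.2)) hx.2.2

lemma volume_le_uncovered_add_tsum_trace (P : DyadicIndex d) :
    volume (G P) ≤ volume (uncovered S G P) + ∑' R : S, volume (trace S G P R) :=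
  (measure_mono (subset_uncovered_union_trace P)).trans <|
    (measure_union_le _ _).trans <| add_le_add_right (measure_iUnion_le _) _

lemma SeparatesNested.tsum_volume_trace_le (h : SeparatesNested S S' G)
    (hGm : ∀ P, MeasurableSet (G P)) (hG : ∀ P, G P ⊆ dCube d P) (R : DyadicIndex d) :
    ∑' P : S', volume (trace S G P R) ≤ volume (dCube d R) := by
  rw [← measure_iUnion (h.pairwise_disjoint_trace hG R) fun P => measurableSet_trace hGm P R]
  exact measure_mono (iUnion_subset fun P x hx => hx.2.1)

-- With `c = η / (1 + η)`, spread mass `c` times Lebesgue measure over `uncovered S G P`, and for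
-- each `R ∈ S` move `c * |trace S G P R|` onto `E R`; as `c + c / η = 1`, there is room for both.
lemma IsSparse.of_separatesNested {η δ : ℝ} (hη : 0 < η) (hS : IsSparse d η S)
    (hnest : SeparatesNested S S' G) (hGm : ∀ P, MeasurableSet (G P))
    (hG : ∀ P, G P ⊆ dCube d P)
    (hGδ : ∀ P, ENNReal.ofReal δ * volume (dCube d P) ≤ volume (G P)) :
    IsSparse d (δ * (η / (1 + η))) S' := by
  obtain ⟨E, hEm, hEsub, hEd, hEη⟩ := hS
  set c := ENNReal.ofReal (η / (1 + η)) with hc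
  set c' := ENNReal.ofReal (1 / (1 + η)) with hc'
  have hcc' : c + c' ≤ 1 := by
    rw [hc, hc', ← ENNReal.ofReal_add (by positivity) (by positivity), ← ENNReal.ofReal_one]
    exact (congrArg ENNReal.ofReal (by field_simp; ring)).le
  have hcη : c = c' * ENNReal.ofReal η := by
    rw [hc, hc', ← ENNReal.ofReal_mul (by positivity), one_div_mul_eq_div]
  have hroom : ∀ R : S, ∑' P : S', c * volume (trace S G P R) ≤ c' * volume (E R) := fun R =>
    calc ∑' P : S', c * volume (trace S G P R) ≤ c * volume (dCube d R) := by
          rw [ENNReal.tsum_mul_left]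
          gcongr
          exact hnest.tsum_volume_trace_le hGm hG R
      _ ≤ c' * volume (E R) := by
          rw [hcη, mul_assoc]
          gcongr
          exact hEη R
  obtain ⟨Y, hYm, hYd, hYsub, hYμ⟩ := exists_pairwise_disjoint_measure_eq_add_tsum hEm
    (fun P : S' => measurableSet_uncovered (S := S) hGm P) (fun _ _ => hEd _ _)
    (hnest.pairwise_disjoint_uncovered hG)
    (fun R => measure_ne_top_of_subset (hEsub R) (volume_dCube_ne_top _)) hcc' hroom
  refine ⟨Y, hYm, fun P x hx => ?_, fun _ _ hne => hYd hne, fun P => ?_⟩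
  · rcases hYsub P x hx with hxH | ⟨R, hR, hxR⟩
    · exact hG P hxH.1
    · obtain ⟨y, hy⟩ := nonempty_of_measure_ne_zero (right_ne_zero_of_mul hR)
      exact hy.1.1.2.subset (hEsub R hxR)
  · calc ENNReal.ofReal (δ * (η / (1 + η))) * volume (dCube d P)
        = c * (ENNReal.ofReal δ * volume (dCube d P)) := by
          rw [ENNReal.ofReal_mul' (by positivity), ← hc]
          ring
      _ ≤ c * (volume (uncovered S G P) + ∑' R : S, volume (trace S G P R)) := by
          gcongr
          exact (hGδ P).trans (volume_le_uncovered_add_tsum_trace P.1)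
      _ = volume (Y P) := by rw [hYμ, mul_add, ENNReal.tsum_mul_left]

end Sparse

section StoppingFamily

open Set

variable {d : ℕ}

/-- The `n`-th generation of the stopping family of `S`: starting from `S` itself, each generation
consists of the maximal cubes of the selections `σ P`, for `P` in the previous one. -/
def stoppingGeneration (σ : DyadicIndex d → Set (DyadicIndex d)) (S : Set (DyadicIndex d)) :
    ℕ → Set (DyadicIndex d)
  | 0 => S
  | n + 1 => {R | ∃ P ∈ stoppingGeneration σ S n, MaximalFor (· ∈ σ P) (dCube d) R}

/-- The smallest family containing `S` and, with each `P`, the maximal cubes of `σ P`. -/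
def stoppingFamily (σ : DyadicIndex d → Set (DyadicIndex d)) (S : Set (DyadicIndex d)) :
    Set (DyadicIndex d) :=
  ⋃ n, stoppingGeneration σ S n

variable {σ : DyadicIndex d → Set (DyadicIndex d)} {S : Set (DyadicIndex d)}

lemma subset_stoppingFamily : S ⊆ stoppingFamily σ S :=
  subset_iUnion (stoppingGeneration σ S) 0

lemma mem_stoppingFamily_of_maximalFor {P R : DyadicIndex d} (hP : P ∈ stoppingFamily σ S)
    (hR : MaximalFor (· ∈ σ P) (dCube d) R) : R ∈ stoppingFamily σ S := by
  obtain ⟨n, hn⟩ := mem_iUnion.1 hP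
  exact mem_iUnion.2 ⟨n + 1, P, hn, hR⟩

variable [NeZero d]

-- If `P'` is selected by `P''`, then `P` and `P''` are nested since both contain `P'`. When `P` is
-- strictly inside `P''`, the cube of `σ P''` containing `P` contradicts the maximality of `P'`.
lemma exists_mem_superset_of_mem_stoppingGeneration (hσ : ∀ P, ∀ R ∈ σ P, dCube d R ⊂ dCube d P)
    (hS : ∀ P, below S P ⊆ σ P) {n m : ℕ} {P P' : DyadicIndex d}
    (hP : P ∈ stoppingGeneration σ S n) (hP' : P' ∈ stoppingGeneration σ S m)
    (h : dCube d P' ⊂ dCube d P) : ∃ R ∈ σ P, dCube d P' ⊆ dCube d R := by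
  induction hN : n + m using Nat.strong_induction_on generalizing n m P P' with
  | _ N ih =>
  cases m with
  | zero => exact ⟨P', hS P ⟨hP', h⟩, subset_rfl⟩
  | succ m =>
    obtain ⟨P'', hP'', hmax⟩ := hP'
    obtain ⟨x, hx⟩ := dCube_nonempty P'
    have hP'P'' : dCube d P' ⊂ dCube d P'' := hσ P'' P' hmax.1
    rcases eq_or_ne P'' P with rfl | hne
    · exact ⟨P', hmax.1, subset_rfl⟩
    have hne' : dCube d P'' ≠ dCube d P := fun heq => hne (dCube_injective heq)
    rcases dCube_subset_or_subset (hP'P''.subset hx) (h.subset hx) with hsub | hsub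
    · obtain ⟨R, hR, hP''R⟩ := ih (n + m) (by lia) hP hP'' (hsub.ssubset_of_ne hne') rfl
      exact ⟨R, hR, hP'P''.subset.trans hP''R⟩
    · obtain ⟨R, hR, hPR⟩ := ih (m + n) (by lia) hP'' hP (hsub.ssubset_of_ne hne'.symm) rfl
      exact absurd (hPR.trans (hmax.2 hR (h.subset.trans hPR))) h.not_subset

lemma exists_mem_superset_of_mem_stoppingFamily (hσ : ∀ P, ∀ R ∈ σ P, dCube d R ⊂ dCube d P)
    (hS : ∀ P, below S P ⊆ σ P) {P P' : DyadicIndex d} (hP : P ∈ stoppingFamily σ S)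
    (hP' : P' ∈ stoppingFamily σ S) (h : dCube d P' ⊂ dCube d P) :
    ∃ R ∈ σ P, dCube d P' ⊆ dCube d R := by
  obtain ⟨n, hn⟩ := mem_iUnion.1 hP
  obtain ⟨m, hm⟩ := mem_iUnion.1 hP'
  exact exists_mem_superset_of_mem_stoppingGeneration hσ hS hn hm h

end StoppingFamily

section Averages

open Set Filter Topology Metric

variable {d : ℕ} {f : (Fin d → ℝ) → ℝ} {P R : DyadicIndex d}

lemma avg_eq_setAverage (Q : Set (Fin d → ℝ)) (f : (Fin d → ℝ) → ℝ) : avg Q f = ⨍ x in Q, f x :=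
  (setAverage_eq ..).symm

lemma avg_nonneg (hf : 0 ≤ f) (Q : Set (Fin d → ℝ)) : 0 ≤ avg Q f :=
  mul_nonneg (by positivity) (integral_nonneg hf)

lemma ofReal_avg_mul_volume (hf : IntegrableOn f (dCube d R)) (hf0 : 0 ≤ f) :
    ENNReal.ofReal (avg (dCube d R) f) * volume (dCube d R) =
      ∫⁻ y in dCube d R, ENNReal.ofReal (f y) := by
  rw [avg_eq_setAverage, ← ofReal_integral_eq_lintegral_ofReal hf (.of_forall hf0),
    ← measure_smul_setAverage f (volume_dCube_ne_top R), smul_eq_mul, mul_comm,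
    ENNReal.ofReal_mul measureReal_nonneg, ofReal_measureReal (volume_dCube_ne_top R)]

lemma avg_le_two_pow_mul_avg (hf : IntegrableOn f (dCube d P)) (hf0 : 0 ≤ f)
    (hRP : dCube d R ⊆ dCube d P) (hgen : P.1 + 1 = R.1) :
    avg (dCube d R) f ≤ 2 ^ d * avg (dCube d P) f := by
  have hvol : (volume (dCube d R)).toReal⁻¹ = 2 ^ d * (volume (dCube d P)).toReal⁻¹ := by
    rw [volume_dCube_toReal, volume_dCube_toReal, ← inv_pow, ← inv_pow, ← mul_pow, ← hgen]
    simp [zpow_add₀, mul_comm]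
  rw [avg, avg, hvol, mul_assoc]
  gcongr 2 ^ d * (_ * ?_)
  exact setIntegral_mono_set hf (.of_forall hf0) hRP.eventuallyLE

lemma abs_avg_sub_le_avg_abs_sub {b : (Fin d → ℝ) → ℝ} (hb : IntegrableOn b (dCube d R))
    (a : ℝ) : |avg (dCube d R) b - a| ≤ avg (dCube d R) fun y => |b y - a| := by
  have hvol := volume_dCube_toReal_pos R
  have hsub : avg (dCube d R) b - a =
      (volume (dCube d R)).toReal⁻¹ * ∫ y in dCube d R, (b y - a) := by
    rw [integral_sub hb (integrableOn_const (volume_dCube_ne_top R)), setIntegral_const,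
      measureReal_def, smul_eq_mul, mul_sub, inv_mul_cancel_left₀ hvol.ne', avg]
  rw [hsub, abs_mul, abs_of_pos (inv_pos.2 hvol), avg]
  gcongr
  exact abs_integral_le_integral_abs

-- The cubes shrinking to `x` are, up to null sets, balls whose closures contain `x`.
lemma ae_tendsto_avg_cubeAt (hf : LocallyIntegrable f volume) :
    ∀ᵐ x, Tendsto (fun n : ℕ => avg (dCube d (cubeAt x n)) f) atTop (𝓝 (f x)) := by
  filter_upwards [IsUnifLocDoublingMeasure.ae_tendsto_average volume hf 1] with x hx
  have hradius : Tendsto (fun n : ℕ => (2 : ℝ) ^ (-(n : ℤ)) / 2) atTop (𝓝[>] 0) := by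
    refine tendsto_nhdsWithin_iff.2 ⟨?_, .of_forall fun n => mem_Ioi.2 (by positivity)⟩
    simpa using (tendsto_pow_atTop_nhds_zero_of_lt_one (r := (2 : ℝ)⁻¹) (by norm_num)
      (by norm_num)).div_const 2
  have hmem : ∀ n : ℕ, x ∈ closedBall (cubeCenter (cubeAt x n)) (1 * ((2 : ℝ) ^ (-(n : ℤ)) / 2)) :=
    fun n => (one_mul ((2 : ℝ) ^ (-(n : ℤ)) / 2)).symm ▸
      dCube_subset_closedBall (cubeAt x n) (mem_cubeAt x n)
  refine (hx (fun n : ℕ => cubeCenter (cubeAt x n)) _ hradius (.of_forall hmem)).congr fun n => ?_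
  rw [avg_eq_setAverage]
  exact (setAverage_congr (dCube_ae_eq_closedBall (cubeAt x n))).symm

end Averages

section CalderonZygmund

open Set Function

variable {d : ℕ} {f : (Fin d → ℝ) → ℝ} {t : ℝ} {P R : DyadicIndex d}

/-- The cubes strictly inside `P` over which `f` has average larger than `t`. -/
def highCubes (f : (Fin d → ℝ) → ℝ) (t : ℝ) (P : DyadicIndex d) : Set (DyadicIndex d) :=
  {R | dCube d R ⊂ dCube d P ∧ t < avg (dCube d R) f}

/-- The part of `P` outside the cubes on which `f` averages more than twice its average
over `P`. -/
def lowPart (f : (Fin d → ℝ) → ℝ) (P : DyadicIndex d) : Set (Fin d → ℝ) :=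
  dCube d P \ ⋃ R ∈ highCubes f (2 * avg (dCube d P) f) P, dCube d R

lemma avg_le_of_notMem_highCubes (hRP : dCube d R ⊆ dCube d P) (hP : avg (dCube d P) f ≤ t)
    (hR : R ∉ highCubes f t P) : avg (dCube d R) f ≤ t := by
  rcases hRP.eq_or_ssubset with heq | hss
  · rwa [heq]
  · exact le_of_not_gt fun hlt => hR ⟨hss, hlt⟩

lemma measurableSet_lowPart : MeasurableSet (lowPart f P) :=
  (measurableSet_dCube P).diff (measurableSet_biUnion_dCube _)

lemma disjoint_dCube_lowPart (hR : R ∈ highCubes f (2 * avg (dCube d P) f) P) :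
    Disjoint (dCube d R) (lowPart f P) :=
  disjoint_sdiff_right.mono_left (subset_biUnion_of_mem (u := dCube d) hR)

lemma highCubes_eq_empty_of_avg_eq_zero (hf : IntegrableOn f (dCube d P)) (hf0 : 0 ≤ f)
    (hP : avg (dCube d P) f = 0) : highCubes f 0 P = ∅ := by
  refine eq_empty_of_forall_notMem fun R hR => hR.2.not_ge ?_
  have hmass : ENNReal.ofReal (avg (dCube d R) f) * volume (dCube d R) ≤ 0 :=
    calc ENNReal.ofReal (avg (dCube d R) f) * volume (dCube d R)
        = ∫⁻ y in dCube d R, ENNReal.ofReal (f y) :=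
          ofReal_avg_mul_volume (hf.mono_set hR.1.subset) hf0
      _ ≤ ∫⁻ y in dCube d P, ENNReal.ofReal (f y) := lintegral_mono_set hR.1.subset
      _ = 0 := by rw [← ofReal_avg_mul_volume hf hf0, hP, ENNReal.ofReal_zero, zero_mul]
  exact ENNReal.ofReal_eq_zero.1 <|
    (mul_eq_zero.1 (nonpos_iff_eq_zero.1 hmass)).resolve_right (volume_dCube_ne_zero R)

variable [NeZero d]

-- The parent of `R` lies in `P` and is not selected.
lemma avg_le_of_maximalFor {A : Set (DyadicIndex d)} (hf : IntegrableOn f (dCube d P))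
    (hf0 : 0 ≤ f) (hA : highCubes f t P ⊆ A) (hP : avg (dCube d P) f ≤ t)
    (hR : MaximalFor (· ∈ A) (dCube d) R) (hRP : dCube d R ⊂ dCube d P) :
    avg (dCube d R) f ≤ 2 ^ d * t := by
  obtain ⟨R', hgen, hRR', hR'P⟩ := exists_parent_of_ssubset hRP
  have hR' : R' ∉ highCubes f t P := fun hR' => by
    have := generation_le_of_subset (hR.2 (hA hR') hRR')
    lia
  calc avg (dCube d R) f ≤ 2 ^ d * avg (dCube d R') f :=
        avg_le_two_pow_mul_avg (hf.mono_set hR'P) hf0 hRR' hgen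
    _ ≤ 2 ^ d * t := by
        gcongr
        exact avg_le_of_notMem_highCubes hR'P hP hR'

lemma ofReal_mul_volume_biUnion_highCubes_le (hf : IntegrableOn f (dCube d P)) (hf0 : 0 ≤ f) :
    ENNReal.ofReal t * volume (⋃ R ∈ highCubes f t P, dCube d R) ≤
      ENNReal.ofReal (avg (dCube d P) f) * volume (dCube d P) := by
  have hUP : ⋃ R ∈ highCubes f t P, dCube d R ⊆ dCube d P := iUnion₂_subset fun R hR => hR.1.subset
  have hU := biUnion_dCube_eq_iUnion_maximalFor (A := highCubes f t P) (m := P.1)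
    fun R hR => generation_le_of_subset hR.1.subset
  calc ENNReal.ofReal t * volume (⋃ R ∈ highCubes f t P, dCube d R)
      = ∑' R : {R // MaximalFor (· ∈ highCubes f t P) (dCube d) R},
          ENNReal.ofReal t * volume (dCube d R) := by
        rw [hU, measure_iUnion pairwise_disjoint_of_maximalFor fun R => measurableSet_dCube _,
          ENNReal.tsum_mul_left]
    _ ≤ ∑' R : {R // MaximalFor (· ∈ highCubes f t P) (dCube d) R},
          ∫⁻ y in dCube d R, ENNReal.ofReal (f y) := by
        gcongr with R
        rw [← ofReal_avg_mul_volume (hf.mono_set R.2.1.1.subset) hf0]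
        gcongr
        exact R.2.1.2.le
    _ = ∫⁻ y in ⋃ R ∈ highCubes f t P, dCube d R, ENNReal.ofReal (f y) := by
        rw [hU, lintegral_iUnion (fun R => measurableSet_dCube _) pairwise_disjoint_of_maximalFor]
    _ ≤ ∫⁻ y in dCube d P, ENNReal.ofReal (f y) := lintegral_mono_set hUP
    _ = ENNReal.ofReal (avg (dCube d P) f) * volume (dCube d P) :=
        (ofReal_avg_mul_volume hf hf0).symm

lemma volume_biUnion_highCubes_le_half (hf : IntegrableOn f (dCube d P)) (hf0 : 0 ≤ f) :
    volume (⋃ R ∈ highCubes f (2 * avg (dCube d P) f) P, dCube d R) ≤ volume (dCube d P) / 2 := by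
  rcases (avg_nonneg hf0 (dCube d P)).eq_or_lt with h0 | hpos
  · rw [← h0, mul_zero, highCubes_eq_empty_of_avg_eq_zero hf hf0 h0.symm]
    simp
  · have hweak := ofReal_mul_volume_biUnion_highCubes_le (t := 2 * avg (dCube d P) f) hf hf0
    rw [ENNReal.ofReal_mul two_pos.le, ENNReal.ofReal_ofNat, mul_comm 2, mul_assoc,
      ENNReal.mul_le_mul_iff_right (ENNReal.ofReal_pos.2 hpos).ne' ENNReal.ofReal_ne_top] at hweak
    exact ENNReal.le_div_iff_mul_le (.inl two_ne_zero) (.inl ofNat_ne_top) |>.2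
      ((mul_comm _ _).trans_le hweak)

lemma half_volume_le_volume_lowPart (hf : IntegrableOn f (dCube d P)) (hf0 : 0 ≤ f) :
    volume (dCube d P) / 2 ≤ volume (lowPart f P) :=
  calc volume (dCube d P) / 2 = volume (dCube d P) - volume (dCube d P) / 2 :=
        (ENNReal.sub_half (volume_dCube_ne_top P)).symm
    _ ≤ volume (dCube d P) - volume (⋃ R ∈ highCubes f (2 * avg (dCube d P) f) P, dCube d R) :=
        tsub_le_tsub_left (volume_biUnion_highCubes_le_half hf hf0) _
    _ ≤ volume (lowPart f P) := le_measure_sdiff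

end CalderonZygmund

section Oscillation

open Set Filter Topology

variable {d : ℕ} {b : (Fin d → ℝ) → ℝ}

/-- The deviation `|b - ⟨b⟩_P|` of `b` from its average over the cube `P`. -/
def deviation (b : (Fin d → ℝ) → ℝ) (P : DyadicIndex d) : (Fin d → ℝ) → ℝ :=
  fun y => |b y - avg (dCube d P) b|

/-- The mean oscillation `Ω(b; P)`. -/
def meanOsc (b : (Fin d → ℝ) → ℝ) (P : DyadicIndex d) : ℝ := avg (dCube d P) (deviation b P)

/-- The inner sum `∑ Ω(b; R) 1_R(x)` of the theorem, over the cubes `R ⊆ Q` of a family `F`. -/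
def oscSum (F : Set (DyadicIndex d)) (b : (Fin d → ℝ) → ℝ) (Q : DyadicIndex d)
    (x : Fin d → ℝ) : ℝ≥0∞ :=
  ∑' R : {R // R ∈ F ∧ dCube d R ⊆ dCube d Q},
    ENNReal.ofReal (meanOsc b R) * (dCube d R.1).indicator (fun _ => (1 : ℝ≥0∞)) x

/-- From a cube `Q` of `F` one can move towards any subcube `C`, either reaching it or stopping at
an intermediate cube of `F`, while the average of `b` changes by at most `K * Ω(b; Q)`. -/
def TelescopesWith (F : Set (DyadicIndex d)) (b : (Fin d → ℝ) → ℝ) (K : ℝ≥0∞) : Prop :=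
  ∀ Q ∈ F, ∀ C, dCube d C ⊆ dCube d Q → ∃ M, dCube d C ⊆ dCube d M ∧
    (M = C ∨ M ∈ F ∧ dCube d M ⊂ dCube d Q) ∧
    edist (avg (dCube d M) b) (avg (dCube d Q) b) ≤ K * ENNReal.ofReal (meanOsc b Q)

/-- The stopping cubes of `P`: those strictly inside `P` which belong to `S` or on which the mean
deviation from `⟨b⟩_P` exceeds `2 Ω(b; P)`. -/
def stoppingCubes (S : Set (DyadicIndex d)) (b : (Fin d → ℝ) → ℝ) (P : DyadicIndex d) :
    Set (DyadicIndex d) :=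
  below S P ∪ highCubes (deviation b P) (2 * meanOsc b P) P

variable {S F : Set (DyadicIndex d)} {P Q R : DyadicIndex d} {x : Fin d → ℝ} {K : ℝ≥0∞}

lemma deviation_nonneg : 0 ≤ deviation b P := fun _ => abs_nonneg _

lemma integrableOn_deviation (hb : IntegrableOn b (dCube d R)) :
    IntegrableOn (deviation b P) (dCube d R) :=
  (hb.sub (integrableOn_const (volume_dCube_ne_top R))).abs

lemma meanOsc_nonneg : 0 ≤ meanOsc b P := avg_nonneg deviation_nonneg _

lemma meanOsc_le_two_mul_meanOsc : meanOsc b P ≤ 2 * meanOsc b P :=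
  le_mul_of_one_le_left meanOsc_nonneg one_le_two

lemma ofReal_meanOsc_le_oscSum (hQ : Q ∈ F) (hx : x ∈ dCube d Q) :
    ENNReal.ofReal (meanOsc b Q) ≤ oscSum F b Q x := by
  refine le_trans ?_ (ENNReal.le_tsum ⟨Q, hQ, subset_rfl⟩)
  simp [hx]

lemma ofReal_meanOsc_add_oscSum_le_oscSum (hQ : Q ∈ F) (hRQ : dCube d R ⊂ dCube d Q)
    (hx : x ∈ dCube d Q) :
    ENNReal.ofReal (meanOsc b Q) + oscSum F b R x ≤ oscSum F b Q x := by
  let g : DyadicIndex d → ℝ≥0∞ := fun r =>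
    ENNReal.ofReal (meanOsc b r) * (dCube d r).indicator (fun _ => (1 : ℝ≥0∞)) x
  let inside : DyadicIndex d → Set (DyadicIndex d) := fun P => {r | r ∈ F ∧ dCube d r ⊆ dCube d P}
  have hdisj : Disjoint {Q} (inside R) :=
    disjoint_singleton_left.2 fun h => hRQ.not_subset h.2
  calc ENNReal.ofReal (meanOsc b Q) + oscSum F b R x
      = ∑' r : ({Q} : Set (DyadicIndex d)), g r + ∑' r : inside R, g r := by
        rw [tsum_singleton Q g]
        congr 1
        simp [g, hx]
    _ = ∑' r : ({Q} ∪ inside R : Set (DyadicIndex d)), g r :=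
        (ENNReal.summable.tsum_union_disjoint hdisj ENNReal.summable).symm
    _ ≤ ∑' r : inside Q, g r := by
        refine ENNReal.tsum_mono_subtype g (union_subset ?_ fun r hr => ?_)
        · exact singleton_subset_iff.2 ⟨hQ, subset_rfl⟩
        · exact ⟨hr.1, hr.2.trans hRQ.subset⟩

lemma edist_avg_le_ofReal_avg_deviation (hb : IntegrableOn b (dCube d R)) :
    edist (avg (dCube d R) b) (avg (dCube d P) b) ≤
      ENNReal.ofReal (avg (dCube d R) (deviation b P)) := by
  rw [edist_dist, Real.dist_eq]
  exact ENNReal.ofReal_le_ofReal (abs_avg_sub_le_avg_abs_sub hb _)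

lemma ssubset_of_mem_stoppingCubes (hR : R ∈ stoppingCubes S b P) : dCube d R ⊂ dCube d P :=
  hR.elim And.right And.left

variable [NeZero d]

lemma TelescopesWith.edist_avg_le (h : TelescopesWith F b K) {C : DyadicIndex d} (hQ : Q ∈ F)
    (hCQ : dCube d C ⊆ dCube d Q) (hx : x ∈ dCube d C) :
    edist (avg (dCube d C) b) (avg (dCube d Q) b) ≤ K * oscSum F b Q x := by
  induction hn : (C.1 - Q.1).toNat using Nat.strong_induction_on generalizing Q with
  | _ n ih =>
  obtain ⟨M, hCM, rfl | ⟨hM, hMQ⟩, hK⟩ := h Q hQ C hCQ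
  · exact hK.trans (mul_le_mul_right (ofReal_meanOsc_le_oscSum hQ (hCQ hx)) _)
  have hgenM := generation_lt_of_ssubset hMQ
  have hgenC := generation_le_of_subset hCM
  calc edist (avg (dCube d C) b) (avg (dCube d Q) b)
      ≤ edist (avg (dCube d C) b) (avg (dCube d M) b) +
          edist (avg (dCube d M) b) (avg (dCube d Q) b) := edist_triangle ..
    _ ≤ K * oscSum F b M x + K * ENNReal.ofReal (meanOsc b Q) :=
        add_le_add (ih _ (by lia) hM hCM rfl) hK
    _ = K * (ENNReal.ofReal (meanOsc b Q) + oscSum F b M x) := by rw [mul_add, add_comm]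
    _ ≤ K * oscSum F b Q x := by
        gcongr
        exact ofReal_meanOsc_add_oscSum_le_oscSum hQ hMQ (hCQ hx)

lemma TelescopesWith.ae_edist_avg_le (h : TelescopesWith F b K)
    (hb : LocallyIntegrable b volume) (hQ : Q ∈ F) :
    ∀ᵐ x ∂volume.restrict (dCube d Q), edist (b x) (avg (dCube d Q) b) ≤ K * oscSum F b Q x := by
  filter_upwards [ae_restrict_of_ae (ae_tendsto_avg_cubeAt hb),
    ae_restrict_mem (measurableSet_dCube Q)] with x hlim hx
  refine le_of_tendsto (hlim.edist tendsto_const_nhds) ?_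
  filter_upwards [eventually_ge_atTop Q.1.toNat] with n hn
  have hsub : dCube d (cubeAt x n) ⊆ dCube d Q :=
    dCube_subset_of_mem (mem_cubeAt x n) hx (Int.toNat_le.1 hn)
  exact h.edist_avg_le hQ hsub (mem_cubeAt x n)

lemma telescopesWith_stoppingFamily (hb : LocallyIntegrable b volume) :
    TelescopesWith (stoppingFamily (stoppingCubes S b) S) b (2 ^ (d + 1)) := by
  intro Q hQ C hCQ
  have hosc : avg (dCube d Q) (deviation b Q) ≤ 2 * meanOsc b Q := meanOsc_le_two_mul_meanOsc
  have hstep : ∀ M, avg (dCube d M) (deviation b Q) ≤ 2 ^ (d + 1) * meanOsc b Q →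
      edist (avg (dCube d M) b) (avg (dCube d Q) b) ≤
        2 ^ (d + 1) * ENNReal.ofReal (meanOsc b Q) := fun M hM => by
    refine (edist_avg_le_ofReal_avg_deviation (integrableOn_dCube hb M)).trans ?_
    rw [← ENNReal.ofReal_ofNat, ← ENNReal.ofReal_pow two_pos.le,
      ← ENNReal.ofReal_mul (by positivity)]
    exact ENNReal.ofReal_le_ofReal hM
  by_cases hC : ∃ R ∈ stoppingCubes S b Q, dCube d C ⊆ dCube d R
  · obtain ⟨R, hR, hCR⟩ := hC
    obtain ⟨M, hM, hRM⟩ := exists_maximalFor_superset (A := stoppingCubes S b Q) (m := Q.1)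
      (fun _ hR => generation_le_of_subset (ssubset_of_mem_stoppingCubes hR).subset) hR
    have hMQ := ssubset_of_mem_stoppingCubes hM.1
    refine ⟨M, hCR.trans hRM, .inr ⟨mem_stoppingFamily_of_maximalFor hQ hM, hMQ⟩, hstep M ?_⟩
    rw [pow_succ, mul_assoc]
    exact avg_le_of_maximalFor (integrableOn_deviation (integrableOn_dCube hb Q)) deviation_nonneg
      subset_union_right hosc hM hMQ
  · refine ⟨C, subset_rfl, .inl rfl, hstep C ?_⟩
    calc avg (dCube d C) (deviation b Q) ≤ 2 * meanOsc b Q :=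
          avg_le_of_notMem_highCubes hCQ hosc fun hhigh => hC ⟨C, .inr hhigh, subset_rfl⟩
      _ ≤ 2 ^ (d + 1) * meanOsc b Q := by
          gcongr
          · exact meanOsc_nonneg
          · exact le_self_pow₀ one_le_two (by lia)

lemma separatesNested_stoppingFamily :
    SeparatesNested S (stoppingFamily (stoppingCubes S b) S)
      fun P => lowPart (deviation b P) P := by
  intro P hP P' hP' h
  obtain ⟨R, hR, hP'R⟩ := exists_mem_superset_of_mem_stoppingFamily
    (fun P R => ssubset_of_mem_stoppingCubes) (fun P => subset_union_left) hP hP' h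
  exact ⟨R, hP'R, ssubset_of_mem_stoppingCubes hR, hR.imp And.left disjoint_dCube_lowPart⟩

lemma IsSparse.stoppingFamily {η : ℝ} (hη : 0 < η) (hS : IsSparse d η S)
    (hb : LocallyIntegrable b volume) :
    IsSparse d (η / (2 * (1 + η))) (stoppingFamily (stoppingCubes S b) S) := by
  have hconst : η / (2 * (1 + η)) = 1 / 2 * (η / (1 + η)) := by field_simp
  rw [hconst]
  refine hS.of_separatesNested hη separatesNested_stoppingFamily (fun P => measurableSet_lowPart)
    (fun P => sdiff_subset) fun P => ?_
  rw [one_div, ENNReal.ofReal_inv_of_pos two_pos, ENNReal.ofReal_ofNat, ← ENNReal.div_eq_inv_mul]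
  exact half_volume_le_volume_lowPart (integrableOn_deviation (integrableOn_dCube hb P))
    deviation_nonneg

end Oscillation

/-- **Lerner–Ombrosi–Rivera-Ríos key lemma.** Every `η`-sparse family `S`
of standard dyadic cubes can be enlarged to an `η/(2(1+η))`-sparse family `S̃ ⊇ S` such
that for every `Q ∈ S̃` and a.e. `x ∈ Q`,
`|b(x) - ⟨b⟩_Q| ≤ 2^{d+2} ∑_{R∈S̃, R⊆Q} Ω(b;R) 1_R(x)`. -/
theorem lerner_ombrosi_riveraRios_key_lemma (d : ℕ) (hd : 1 ≤ d)
    (η : ℝ) (hη : 0 < η) (hη1 : η < 1)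
    (S : Set (ℤ × (Fin d → ℤ))) (hS : IsSparse d η S)
    (b : (Fin d → ℝ) → ℝ) (hb : MeasureTheory.LocallyIntegrable b volume) :
    ∃ S' : Set (ℤ × (Fin d → ℤ)), S ⊆ S' ∧ IsSparse d (η / (2 * (1 + η))) S' ∧
      ∀ q ∈ S', ∀ᵐ x ∂(volume.restrict (dCube d q)),
        ENNReal.ofReal |b x - avg (dCube d q) b|
          ≤ 2 ^ (d + 2) *
              ∑' r : {r // r ∈ S' ∧ dCube d r ⊆ dCube d q},
                ENNReal.ofReal (avg (dCube d r.1) (fun y => |b y - avg (dCube d r.1) b|)) *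
                  (dCube d r.1).indicator (fun _ => (1 : ℝ≥0∞)) x := by
  have : NeZero d := ⟨by lia⟩
  refine ⟨stoppingFamily (stoppingCubes S b) S, subset_stoppingFamily,
    hS.stoppingFamily hη hb, fun q hq => ?_⟩
  filter_upwards [(telescopesWith_stoppingFamily hb).ae_edist_avg_le hb hq] with x hx
  rw [← Real.dist_eq, ← edist_dist]
  calc edist (b x) (avg (dCube d q) b)
      ≤ 2 ^ (d + 1) * oscSum (stoppingFamily (stoppingCubes S b) S) b q x := hx
    _ ≤ 2 ^ (d + 2) * oscSum (stoppingFamily (stoppingCubes S b) S) b q x := by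
        gcongr
        · exact one_le_two
        · lia

end
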